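/- Assume the agents have identical utilities given by a single utility function u with u(r) = 1 for every resource r ∈ R, and let A be nonempty. For each agent a, let ℓ(a) denote the maximum number k such that there is a directed path with k arcs starting at a in G (ℓ(a) is well defined when G is acyclic). Then a complete strongly G-envy-free allocation exists if and only if G is acyclic and |R| ≥ Σ_{a∈A} ℓ(a). -/

import Mathlib

/-!
With all-ones utilities an allocation matters only through its bundle sizes, which can be any
family of naturals with sum `|R|`. Strong envy-freeness asks the sizes to decrease strictly along
arcs, which rules out cycles. On an acyclic graph `ℓ` itself decreases along arcs, and it is the
pointwise least such function, so `∑ ℓ a` resources are necessary. They suffice because all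
surplus resources can go to an agent maximising `ℓ`: such an agent has no incoming arcs, so
nobody comes to envy it.
-/

open Finset

section Potential

variable {A : Type*} {E : A → A → Prop}

/-- A potential of a directed graph: a vertex labelling that strictly decreases along every arc.
The bundle values of a strongly envy-free allocation under identical utilities form one. -/
def IsPotential {β : Type*} [LT β] (E : A → A → Prop) (f : A → β) : Prop :=
  ∀ x y, E x y → f y < f x

/-- The possible numbers of arcs of a directed path starting at `a`. A path with `k` arcs is
encoded as an infinite sequence whose entries after index `k` are arbitrary. -/
def pathLengths (E : A → A → Prop) (a : A) : Set ℕ :=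
  {k | ∃ v : ℕ → A, v 0 = a ∧ ∀ i < k, E (v i) (v (i + 1))}

theorem succ_mem_pathLengths {x y : A} {k : ℕ} (hxy : E x y) (hk : k ∈ pathLengths E y) :
    k + 1 ∈ pathLengths E x := by
  obtain ⟨v, rfl, hv⟩ := hk
  refine ⟨fun n => Nat.casesOn n x v, rfl, ?_⟩
  rintro (_ | i) hi
  · exact hxy
  · exact hv i (Nat.lt_of_succ_lt_succ hi)

theorem isPotential_of_isGreatest_pathLengths {ℓ : A → ℕ}
    (hℓ : ∀ a, IsGreatest (pathLengths E a) (ℓ a)) : IsPotential E ℓ :=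
  fun x y hxy => (hℓ x).2 (succ_mem_pathLengths hxy (hℓ y).1)

namespace IsPotential

theorem not_transGen_self {β : Type*} [Preorder β] {f : A → β} (hf : IsPotential E f) (a : A) :
    ¬ Relation.TransGen E a a := by
  intro hcycle
  have hlt : Relation.TransGen (· > ·) (f a) (f a) := hcycle.lift f hf
  rw [Relation.transGen_eq_self] at hlt
  exact lt_irrefl _ hlt

theorem le_of_mem_pathLengths {f : A → ℕ} (hf : IsPotential E f) {a : A} {k : ℕ}
    (hk : k ∈ pathLengths E a) : k ≤ f a := by
  obtain ⟨v, rfl, hv⟩ := hk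
  have hdrop : ∀ i ≤ k, f (v i) + i ≤ f (v 0) := by
    intro i hi
    induction i with
    | zero => rfl
    | succ i ih =>
      have := hf _ _ (hv i hi)
      have := ih (Nat.le_of_succ_le hi)
      omega
  exact (Nat.le_add_left _ _).trans (hdrop k le_rfl)

theorem add_single_of_no_incoming [DecidableEq A] {f : A → ℕ} (hf : IsPotential E f) {m : A}
    (hm : ∀ x, ¬ E x m) (d : ℕ) : IsPotential E (f + Pi.single m d : A → ℕ) := by
  intro x y hxy
  have hym : y ≠ m := by
    rintro rfl
    exact hm x hxy
  calc (f + Pi.single m d : A → ℕ) y = f y := by simp [hym]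
    _ < f x := hf x y hxy
    _ ≤ (f + Pi.single m d : A → ℕ) x := Nat.le_add_right _ _

theorem exists_sum_eq [Fintype A] [Nonempty A] {f : A → ℕ} (hf : IsPotential E f) {n : ℕ}
    (hn : ∑ a, f a ≤ n) : ∃ g : A → ℕ, IsPotential E g ∧ ∑ a, g a = n := by
  classical
  obtain ⟨m, hm⟩ := Finite.exists_max f
  have hno_incoming : ∀ x, ¬ E x m := fun x hxm => (hf x m hxm).not_ge (hm x)
  refine ⟨f + Pi.single m (n - ∑ a, f a), hf.add_single_of_no_incoming hno_incoming _, ?_⟩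
  simp [sum_add_distrib, Nat.add_sub_cancel' hn]

end IsPotential

theorem exists_isPotential_sum_eq_iff [Fintype A] [Nonempty A] {ℓ : A → ℕ}
    (hℓ : (∀ a, ¬ Relation.TransGen E a a) → ∀ a, IsGreatest (pathLengths E a) (ℓ a)) (n : ℕ) :
    (∃ f : A → ℕ, IsPotential E f ∧ ∑ a, f a = n) ↔
      (∀ a, ¬ Relation.TransGen E a a) ∧ ∑ a, ℓ a ≤ n := by
  constructor
  · rintro ⟨f, hf, rfl⟩
    have hacyclic := hf.not_transGen_self
    exact ⟨hacyclic, sum_le_sum fun a _ => hf.le_of_mem_pathLengths (hℓ hacyclic a).1⟩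
  · rintro ⟨hacyclic, hle⟩
    exact (isPotential_of_isGreatest_pathLengths (hℓ hacyclic)).exists_sum_eq hle

end Potential

section Allocation

variable {A R : Type*}

/-- A complete allocation of the resources `R` to the agents `A`: pairwise disjoint bundles that
together contain every resource. -/
structure IsCompleteAllocation (π : A → Finset R) : Prop where
  disjoint : ∀ x y, x ≠ y → Disjoint (π x) (π y)
  exists_mem : ∀ r, ∃ a, r ∈ π a

theorem IsCompleteAllocation.sum_card [Fintype A] [Fintype R] {π : A → Finset R}
    (hπ : IsCompleteAllocation π) : ∑ a, #(π a) = Fintype.card R := by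
  classical
  have hcover : univ.biUnion π = univ := by
    ext r
    simpa using hπ.exists_mem r
  rw [← card_biUnion fun x _ y _ => hπ.disjoint x y, hcover, card_univ]

theorem isCompleteAllocation_fibers [Fintype R] [DecidableEq A] (owner : R → A) :
    IsCompleteAllocation fun a => ({r | owner r = a} : Finset R) where
  disjoint x y hxy := disjoint_filter.2 fun r _ hx hy => hxy (hx.symm.trans hy)
  exists_mem r := ⟨owner r, by simp⟩

theorem exists_card_fiber_eq [Fintype A] [Fintype R] [DecidableEq A] {f : A → ℕ}
    (hf : ∑ a, f a = Fintype.card R) : ∃ owner : R → A, ∀ a, #{r | owner r = a} = f a := by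
  have hcard : Fintype.card R = Fintype.card (Σ a, Fin (f a)) := by simp [hf]
  let e : R ≃ Σ a, Fin (f a) := Fintype.equivOfCardEq hcard
  refine ⟨fun r => (e r).1, fun a => ?_⟩
  let fiberEquiv : {r // (e r).1 = a} ≃ Fin (f a) :=
    (e.subtypeEquiv fun _ => Iff.rfl).trans (Equiv.sigmaSubtype a)
  rw [← Fintype.card_subtype, Fintype.card_congr fiberEquiv, Fintype.card_fin]

theorem exists_isCompleteAllocation_card_eq [Fintype A] [Fintype R] {f : A → ℕ}
    (hf : ∑ a, f a = Fintype.card R) :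
    ∃ π : A → Finset R, IsCompleteAllocation π ∧ ∀ a, #(π a) = f a := by
  classical
  obtain ⟨owner, howner⟩ := exists_card_fiber_eq hf
  exact ⟨_, isCompleteAllocation_fibers owner, howner⟩

end Allocation

/-- Identical all-ones utilities on a nonempty agent set; with
`ℓ a` the maximum number of arcs of a directed path starting at `a`
(well defined when `G` is acyclic), a complete strongly G-envy-free allocation
exists iff `G` is acyclic and `|R| ≥ Σ_{a∈A} ℓ a`. -/
theorem stmt_12 {A R : Type*} [Fintype A] [Fintype R] [Nonempty A]
    (E : A → A → Prop) (hirr : ∀ a, ¬ E a a)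
    (u : R → ℕ) (hu : ∀ r, u r = 1)
    (ℓ : A → ℕ)
    (hℓ : (∀ a, ¬ Relation.TransGen E a a) → ∀ a : A,
      IsGreatest {k : ℕ | ∃ v : ℕ → A, v 0 = a ∧ ∀ i < k, E (v i) (v (i + 1))} (ℓ a)) :
    (∃ π : A → Finset R, (∀ x y, x ≠ y → Disjoint (π x) (π y)) ∧
      (∀ r : R, ∃ a, r ∈ π a) ∧
      (∀ x y, E x y → ∑ r ∈ π y, u r < ∑ r ∈ π x, u r)) ↔
    ((∀ a, ¬ Relation.TransGen E a a) ∧ ∑ a : A, ℓ a ≤ Fintype.card R) := by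
  have hvalue (s : Finset R) : ∑ r ∈ s, u r = #s := by simp [hu]
  simp only [hvalue]
  refine Iff.trans ?_ (exists_isPotential_sum_eq_iff hℓ (Fintype.card R))
  constructor
  · rintro ⟨π, hdisjoint, hcover, henvy⟩
    exact ⟨fun a => #(π a), henvy, IsCompleteAllocation.sum_card ⟨hdisjoint, hcover⟩⟩
  · rintro ⟨f, hf, hsum⟩
    obtain ⟨π, hπ, hcard⟩ := exists_isCompleteAllocation_card_eq hsum
    refine ⟨π, hπ.disjoint, hπ.exists_mem, fun x y hxy => ?_⟩
    simpa only [hcard] using hf x y hxy
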